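/- Let G be a finite group of odd order and let ρ : G → GL(ℤⁿ) be an action of G on ℤⁿ = (Fin n → ℤ) by ℤ-linear automorphisms each of which preserves the standard bilinear form ⟨x,y⟩ = ∑ᵢ xᵢ·yᵢ. Then there exist signs ε : Fin n → {±1} such that G permutes the basis {ε(i)·eᵢ : i ∈ Fin n}; that is, for every g ∈ G and every i there exists j with ρ(g)(ε(i)·eᵢ) = ε(j)·e_j. Consequently ℤⁿ is a direct sum of permutation modules ℤ[G/H_α] for suitable subgroups H_α ⊆ G. -/

import Mathlib

/-!
An integral vector of norm one is, up to sign, a standard basis vector, so every form-preserving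
automorphism is a signed permutation: `g eᵢ = c(g, i) e_{σ(g, i)}` with `c(g, i) = ±1`. The signs
satisfy the cocycle identity `c(gh, i) = c(g, σ(h, i)) c(h, i)`. Multiplying it over all `g ∈ G`
gives `ε(i) = ε(σ(h, i)) c(h, i)^|G|` for `ε(i) = ∏ g, c(g, i)`, and since `|G|` is odd the last
factor is `c(h, i)` itself: the signs `ε` are those sought.
-/

theorem prod_eq_prod_mul_pow_card_of_cocycle {G ι A : Type*} [Group G] [Fintype G] [CommMonoid A]
    {σ : G → ι → ι} {c : G → ι → A} (hc : ∀ g h i, c (g * h) i = c g (σ h i) * c h i)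
    (h : G) (i : ι) :
    ∏ g, c g i = (∏ g, c g (σ h i)) * c h i ^ Fintype.card G :=
  calc ∏ g, c g i = ∏ g, c (g * h) i := (Equiv.prod_comp (Equiv.mulRight h) (c · i)).symm
    _ = (∏ g, c g (σ h i)) * c h i ^ Fintype.card G := by
      simp only [hc, Finset.prod_mul_distrib, Finset.prod_const, Finset.card_univ]

theorem eq_of_intUnits_smul_eq_smul {M : Type*} [AddCommGroup M] {x y : M} (hxy : x ≠ -y)
    {u w : ℤˣ} (h : u • x = w • y) : u = w := by
  by_contra hne
  rw [Int.units_ne_iff_eq_neg.mp hne, Units.neg_smul, ← smul_neg, smul_left_cancel_iff] at h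
  exact hxy (neg_eq_iff_eq_neg.mp h)

theorem exists_sign_of_odd_card_of_signed_permutation {R M G ι : Type*} [Semiring R]
    [AddCommGroup M] [Module R M] [Group G] (hodd : Odd (Nat.card G)) (ρ : G →* (M ≃ₗ[R] M))
    {e : ι → M} (he : ∀ i j, e i ≠ -e j)
    (hρ : ∀ g i, ∃ (j : ι) (u : ℤˣ), ρ g (e i) = u • e j) :
    ∃ ε : ι → ℤˣ, ∀ g i, ∃ j, ρ g (ε i • e i) = ε j • e j := by
  have : Finite G := Nat.finite_of_card_ne_zero hodd.pos.ne'
  have := Fintype.ofFinite G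
  rw [Nat.card_eq_fintype_card] at hodd
  have hsmul (g : G) (u : ℤˣ) (x : M) : ρ g (u • x) = u • ρ g x := by
    simp only [Units.smul_def, map_zsmul]
  choose σ c hσc using hρ
  have hcocycle (g h : G) (i : ι) : c (g * h) i = c g (σ h i) * c h i := by
    refine eq_of_intUnits_smul_eq_smul (he (σ (g * h) i) (σ g (σ h i))) ?_
    rw [← hσc, map_mul, LinearEquiv.mul_apply, hσc h, hsmul, hσc g, smul_smul,
      mul_comm]
  let ε (i : ι) : ℤˣ := ∏ g, c g i
  have hε (h : G) (i : ι) : ε i = ε (σ h i) * c h i := by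
    have hpow : c h i ^ Fintype.card G = c h i := by
      rw [Int.units_pow_eq_pow_mod_two, Nat.odd_iff.mp hodd, pow_one]
    simpa only [hpow] using prod_eq_prod_mul_pow_card_of_cocycle hcocycle h i
  refine ⟨ε, fun h i => ⟨σ h i, ?_⟩⟩
  rw [hsmul, hσc, smul_smul, hε h i, mul_assoc, Int.units_mul_self, mul_one]

theorem exists_eq_single_intUnits_of_sum_sq_eq_one {ι : Type*} {v : ι →₀ ℤ}
    (hv : v.sum (fun _ a => a ^ 2) = 1) : ∃ (j : ι) (u : ℤˣ), v = Finsupp.single j (u : ℤ) := by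
  have hcard : (v.support.card : ℤ) ≤ 1 := by
    rw [← hv, Finsupp.sum, Finset.cast_card]
    exact Finset.sum_le_sum fun i hi =>
      Int.add_one_le_of_lt (sq_pos_of_ne_zero (Finsupp.mem_support_iff.mp hi))
  have hv0 : v ≠ 0 := by
    rintro rfl
    simp at hv
  obtain ⟨j, a, -, rfl⟩ := Finsupp.card_support_eq_one'.mp <| le_antisymm (mod_cast hcard)
    (Finset.card_pos.mpr (Finsupp.support_nonempty_iff.mpr hv0))
  rw [Finsupp.sum_single_index (zero_pow two_ne_zero)] at hv
  exact ⟨j, (IsUnit.of_pow_eq_one hv two_ne_zero).unit, rfl⟩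

theorem basis_ne_neg_basis {ι R M : Type*} [Ring R] [PartialOrder R] [IsStrictOrderedRing R]
    [AddCommGroup M] [Module R M] (b : Module.Basis ι R M) (i j : ι) : b i ≠ -b j := by
  intro hij
  have hcoord : (1 : R) = -Finsupp.single j 1 i := by
    simpa using congrArg (b.repr · i) hij
  have hnonneg : (0 : R) ≤ Finsupp.single j 1 i := Finsupp.single_nonneg.mpr zero_le_one i
  exact (zero_lt_one' R).not_ge (hcoord.trans_le (neg_nonpos.mpr hnonneg))

theorem odd_group_form_preserving_action_permutes_signed_basis_general {ι M G : Type*}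
    [AddCommGroup M] [Group G] (hodd : Odd (Nat.card G)) (b : Module.Basis ι ℤ M)
    (ρ : G →* (M ≃ₗ[ℤ] M))
    (hnorm : ∀ g x, (b.repr (ρ g x)).sum (fun _ a => a ^ 2) = (b.repr x).sum fun _ a => a ^ 2) :
    ∃ ε : ι → ℤˣ, ∀ g i, ∃ j, ρ g (ε i • b i) = ε j • b j := by
  refine exists_sign_of_odd_card_of_signed_permutation hodd ρ (basis_ne_neg_basis b) fun g i => ?_
  have hone : (b.repr (ρ g (b i))).sum (fun _ a => a ^ 2) = 1 := by
    rw [hnorm, b.repr_self, Finsupp.sum_single_index (zero_pow two_ne_zero), one_pow]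
  obtain ⟨j, u, hju⟩ := exists_eq_single_intUnits_of_sum_sq_eq_one hone
  exact ⟨j, u, by rw [Units.smul_def, ← b.repr_symm_single, ← hju, b.repr.symm_apply_apply]⟩

/-- If a finite group of odd order acts on `ℤⁿ` by automorphisms preserving the
standard bilinear form, then after changing signs of the standard basis vectors,
the group permutes the resulting basis `{ε(i) • eᵢ}`. -/
theorem odd_group_form_preserving_action_permutes_signed_basis
    (n : ℕ) (G : Type*) [Group G] [Finite G] (hodd : Odd (Nat.card G))
    (ρ : G →* ((Fin n → ℤ) ≃ₗ[ℤ] (Fin n → ℤ)))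
    (hform : ∀ (g : G) (x y : Fin n → ℤ),
      ∑ i, ρ g x i * ρ g y i = ∑ i, x i * y i) :
    ∃ ε : Fin n → ℤ, (∀ i, ε i = 1 ∨ ε i = -1) ∧
      ∀ (g : G) (i : Fin n), ∃ j : Fin n,
        ρ g (ε i • Pi.single i 1) = ε j • Pi.single j 1 := by
  obtain ⟨ε, hε⟩ := odd_group_form_preserving_action_permutes_signed_basis_general hodd
    (Pi.basisFun ℤ (Fin n)) ρ fun g x => by simpa [Finsupp.sum_fintype, sq] using hform g x x
  exact ⟨fun i => ε i, fun i => Int.isUnit_iff.mp (ε i).isUnit, by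
    simpa only [Units.smul_def, Pi.basisFun_apply] using hε⟩
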